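/- arXiv:2005.01410 — 2 statements merged into one kernel-verified Lean document; each statement's English description precedes it below -/
import Mathlib

section
/- Let m and n be positive integers, let U = {1, 2, ..., m+n}, and let t be an integer with m(m+1)/2 ≤ t ≤ m(m+1)/2 + mn; set t* = t − m(m+1)/2. Then the sum, over all m-element subsets X of U whose elements sum to t, of V_X · V_Y (where Y = U \ X is the complement of X in U) equals G(m+1) · G(n+1) · C(mn, t*), where C denotes the binomial coefficient. -/
/-- The Vandermonde product `V_X = ∏_{i<j, i,j ∈ X} (j - i)` of a finite set of naturals. -/
def vand (X : Finset ℕ) : ℤ :=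
  ∏ p ∈ X.offDiag.filter (fun p => p.1 < p.2), ((p.2 : ℤ) - (p.1 : ℤ))

/-- `barnesG m = G(m+1) = 0!·1!···(m−1)!`, the Barnes G-function at `m+1`. -/
def barnesG (m : ℕ) : ℕ := ∏ i ∈ Finset.range m, Nat.factorial i

/-!
Consider the confluent Vandermonde determinant with a node `-q` of multiplicity `m` and a node `1`
of multiplicity `n`. Translating the first node to `0` shows that it equals `(1 + q) ^ (m * n)`. On
the other hand, expand it by Laplace along the two blocks of columns. Up to powers of `-q` and
factorials, the minor of either block on a set of rows is `det (x_i.choose j)`, that is, the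
Vandermonde product of the set, and the sign of the term for a set `X` of rows turns the power of
`-q` into `q ^ ∑ x ∈ X, x`. So the generating function of `vand X * vand Xᶜ` by the sum of `X` is a
multiple of `(1 + q) ^ (m * n)`, and its coefficients are binomial coefficients.
-/

open Finset Matrix Polynomial
open Equiv (Perm)

section Shuffle

variable {m n : ℕ} {σ : Perm (Fin (m + n))}

theorem card_natAdd_lt_castAdd_of_strictMono (hσ : StrictMono fun i => σ (Fin.castAdd n i))
    (i : Fin m) :
    i + #{j | σ (Fin.natAdd m j) < σ (Fin.castAdd n i)} = σ (Fin.castAdd n i) := by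
  have hcard : #{x | σ x < σ (Fin.castAdd n i)} = σ (Fin.castAdd n i) := by
    rw [card_filter, Equiv.sum_comp σ fun y => if y < σ (Fin.castAdd n i) then 1 else 0,
      ← card_filter, filter_gt_eq_Iio, Fin.card_Iio]
  simpa only [card_filter, Fin.sum_univ_add, hσ.lt_iff_lt, ← card_filter (· < i), filter_gt_eq_Iio,
    Fin.card_Iio] using hcard

theorem sign_eq_prod_prod_of_strictMono (hl : StrictMono fun i => σ (Fin.castAdd n i))
    (hr : StrictMono fun j => σ (Fin.natAdd m j)) :
    Perm.sign σ =
      ∏ i, ∏ j, if σ (Fin.natAdd m j) < σ (Fin.castAdd n i) then -1 else 1 := by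
  have hIio (j : Fin n) (f : Fin (m + n) → ℤˣ) (hf : ∀ i < j, f (Fin.natAdd m i) = 1) :
      ∏ i ∈ Iio (Fin.natAdd m j), f i = ∏ i, f (Fin.castAdd n i) := by
    rw [← filter_gt_eq_Iio, prod_filter, Fin.prod_univ_add]
    have hlt (i : Fin m) : Fin.castAdd n i < Fin.natAdd m j :=
      (Fin.castAdd_lt m i).trans_le (Fin.le_coe_natAdd m j)
    simp +contextual [hf, hlt]
  rw [Perm.sign_eq_prod_prod_Iio, Fin.prod_univ_add, prod_comm]
  simp only [Fin.prod_Iio_castAdd]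
  rw [prod_eq_one fun j _ => prod_eq_one fun i hi => if_pos (hl (mem_Iio.1 hi)), one_mul]
  refine prod_congr rfl fun j _ => ?_
  rw [hIio j _ fun i hi => if_pos (hr hi)]
  refine prod_congr rfl fun i _ => ?_
  have hne : σ (Fin.castAdd n i) ≠ σ (Fin.natAdd m j) := by simpa [Fin.ext_iff] using by lia
  rcases hne.lt_or_gt with h | h <;> simp [h, h.not_gt]

theorem sign_eq_neg_one_pow_of_strictMono (hl : StrictMono fun i => σ (Fin.castAdd n i))
    (hr : StrictMono fun j => σ (Fin.natAdd m j)) :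
    Perm.sign σ = (-1) ^ ∑ i : Fin m, (i + σ (Fin.castAdd n i) : ℕ) := by
  rw [sign_eq_prod_prod_of_strictMono hl hr, ← prod_pow_eq_pow_sum]
  refine prod_congr rfl fun i _ => ?_
  rw [← card_natAdd_lt_castAdd_of_strictMono hl, ← add_assoc, pow_add, Even.neg_one_pow ⟨_, rfl⟩,
    one_mul, prod_ite, prod_const_one, mul_one, prod_const]

end Shuffle

section Laplace

variable {ι κ R : Type*} [Fintype ι] [Fintype κ] [DecidableEq ι] [DecidableEq κ] [CommRing R]

theorem sum_perm_filter_image_inl_eq {M : Type*} [AddCommMonoid M] (σ₀ : Perm (ι ⊕ κ))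
    (f : Perm (ι ⊕ κ) → M) :
    ∑ σ with univ.image (fun i => σ (Sum.inl i)) = univ.image (fun i => σ₀ (Sum.inl i)), f σ =
      ∑ p : Perm ι × Perm κ, f (σ₀ * Perm.sumCongr p.1 p.2) := by
  symm
  refine sum_bij (fun p _ => σ₀ * Perm.sumCongr p.1 p.2) ?_ ?_ ?_ fun _ _ => rfl
  · rintro ⟨τ, ρ⟩ -
    simp only [mem_filter, mem_univ, true_and, Perm.mul_apply, Perm.sumCongr_apply, Sum.map_inl]
    ext x
    simp [τ.surjective.exists (p := fun i => σ₀ (Sum.inl i) = x)]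
  · rintro p - p' - h
    exact Perm.sumCongrHom_injective (mul_left_cancel h)
  · intro σ hσ
    have hmaps : Set.MapsTo (σ₀⁻¹ * σ) (Set.range Sum.inl) (Set.range Sum.inl) := by
      rintro _ ⟨i, rfl⟩
      have hi : σ (Sum.inl i) ∈ univ.image fun i => σ₀ (Sum.inl i) := by
        rw [← (mem_filter.1 hσ).2]
        exact mem_image_of_mem _ (mem_univ i)
      obtain ⟨j, -, hj⟩ := mem_image.1 hi
      exact ⟨j, by simp [← hj]⟩
    obtain ⟨p, hp⟩ := Perm.mem_sumCongrHom_range_of_perm_mapsTo_inl hmaps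
    exact ⟨p, mem_univ _, eq_inv_mul_iff_mul_eq.1 hp⟩

theorem sum_sign_sumCongr_mul_prod (M : Matrix (ι ⊕ κ) (ι ⊕ κ) R) :
    ∑ p : Perm ι × Perm κ, (Perm.sign (Perm.sumCongr p.1 p.2) : ℤ) *
      ∏ x, M (Perm.sumCongr p.1 p.2 x) x = M.toBlocks₁₁.det * M.toBlocks₂₂.det := by
  rw [det_apply', det_apply', sum_mul_sum, ← sum_product']
  refine sum_congr rfl fun p _ => ?_
  simp only [Fintype.prod_sum_type, Perm.sign_sumCongr, Perm.sumCongr_apply, Sum.map_inl,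
    Sum.map_inr, toBlocks₁₁, toBlocks₂₂, of_apply]
  push_cast
  ring

/-- The maximal minor of a matrix with `m` columns on the rows in `S`, taken in increasing order;
this is how the terms of a Laplace expansion are indexed by finsets. If `#S ≠ m`, it is `0`. -/
def maximalMinor {α : Type*} [LinearOrder α] {m : ℕ} (A : Matrix α (Fin m) R) (S : Finset α) : R :=
  if h : #S = m then (A.submatrix (S.orderEmbOfFin h) id).det else 0

theorem sum_orderEmbOfFin {α M : Type*} [LinearOrder α] [AddCommMonoid M] {S : Finset α} {k : ℕ}
    (hS : #S = k) (f : α → M) : ∑ i, f (S.orderEmbOfFin hS i) = ∑ x ∈ S, f x := by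
  conv_rhs => rw [← map_orderEmbOfFin_univ S hS, sum_map]
  rfl

theorem sign_finSumEquivOfFinset {m n : ℕ} {S : Finset (Fin (m + n))} (hm : #S = m)
    (hn : #Sᶜ = n) :
    Perm.sign ((finSumEquivOfFinset hm hn).trans finSumFinEquiv.symm) =
      (-1) ^ (∑ i ∈ range m, i + ∑ x ∈ S, (x : ℕ)) := by
  rw [← Perm.sign_permCongr finSumFinEquiv, sign_eq_neg_one_pow_of_strictMono, sum_add_distrib,
    ← sum_range (fun i => i), ← sum_orderEmbOfFin hm (fun x => (x : ℕ))]
  · simp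
  · intro i j hij
    simpa
  · intro i j hij
    simpa

theorem sum_perm_filter_image_eq_maximalMinor_mul {m n : ℕ} (A : Matrix (Fin (m + n)) (Fin m) R)
    (B : Matrix (Fin (m + n)) (Fin n) R) {S : Finset (Fin (m + n))} (hm : #S = m) :
    ∑ σ : Perm (Fin m ⊕ Fin n) with univ.image (fun i => finSumFinEquiv (σ (Sum.inl i))) = S,
        (Perm.sign σ : ℤ) * ∏ x, (fromCols A B).submatrix finSumFinEquiv id (σ x) x =
      (-1) ^ (∑ i ∈ range m, i + ∑ x ∈ S, (x : ℕ)) * (maximalMinor A S * maximalMinor B Sᶜ) := by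
  have hn : #Sᶜ = n := by simp [card_compl, hm]
  set M := (fromCols A B).submatrix finSumFinEquiv id with hM
  set σS := (finSumEquivOfFinset hm hn).trans finSumFinEquiv.symm with hσS
  have hfiber (σ : Perm (Fin m ⊕ Fin n)) :
      univ.image (fun i => finSumFinEquiv (σ (Sum.inl i))) = S ↔
        univ.image (fun i => σ (Sum.inl i)) = univ.image fun i => σS (Sum.inl i) := by
    rw [← (image_injective finSumFinEquiv.injective).eq_iff, image_image, image_image]
    simp [hσS, Function.comp_def]
  have hA : (M.submatrix σS id).toBlocks₁₁ = A.submatrix (S.orderEmbOfFin hm) id := by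
    ext; simp [hM, hσS, toBlocks₁₁]
  have hB : (M.submatrix σS id).toBlocks₂₂ = B.submatrix (Sᶜ.orderEmbOfFin hn) id := by
    ext; simp [hM, hσS, toBlocks₂₂]
  simp only [hfiber]
  rw [sum_perm_filter_image_inl_eq, maximalMinor, maximalMinor, dif_pos hm, dif_pos hn, ← hA, ← hB,
    ← sum_sign_sumCongr_mul_prod, mul_sum]
  refine sum_congr rfl fun p _ => ?_
  rw [Perm.sign_mul, sign_finSumEquivOfFinset]
  push_cast
  exact mul_assoc _ _ _

theorem det_fromCols_eq_sum_maximalMinor {m n : ℕ} (A : Matrix (Fin (m + n)) (Fin m) R)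
    (B : Matrix (Fin (m + n)) (Fin n) R) :
    ((fromCols A B).submatrix finSumFinEquiv id).det =
      ∑ S ∈ powersetCard m (univ : Finset (Fin (m + n))),
        (-1) ^ (∑ i ∈ range m, i + ∑ x ∈ S, (x : ℕ)) *
          (maximalMinor A S * maximalMinor B Sᶜ) := by
  have hmaps (σ : Perm (Fin m ⊕ Fin n)) :
      univ.image (fun i => finSumFinEquiv (σ (Sum.inl i))) ∈ powersetCard m univ := by
    rw [mem_powersetCard_univ, card_image_of_injective _ fun i j h => by simpa using h, card_fin]
  rw [det_apply', ← sum_fiberwise_of_maps_to fun σ _ => hmaps σ]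
  exact sum_congr rfl fun S hS =>
    sum_perm_filter_image_eq_maximalMinor_mul A B (mem_powersetCard_univ.1 hS)

end Laplace

section TaylorMatrix

variable {R : Type*} [CommRing R]

/-- The block of a confluent Vandermonde matrix that belongs to a node `r` of multiplicity `k`: row
`i` holds the first `k` Taylor coefficients of `X ^ i` at `r`. Where the subtraction `i - a` is
truncated, the binomial coefficient vanishes. -/
def taylorMatrix (r : R) (N k : ℕ) : Matrix (Fin N) (Fin k) R :=
  of fun i a => r ^ (i - a : ℕ) * (i : ℕ).choose a

theorem taylorMatrix_apply (r : R) {N k : ℕ} (i : Fin N) (a : Fin k) :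
    taylorMatrix r N k i a = ((X + C r) ^ (i : ℕ)).coeff a :=
  (coeff_X_add_C_pow r i a).symm

theorem sum_coeff_mul_coeff_pow_mul {p : R[X]} {N : ℕ} (hp : p.natDegree < N) (f g : R[X])
    (a : ℕ) :
    ∑ j : Fin N, p.coeff j * (f ^ (j : ℕ) * g).coeff a = (p.comp f * g).coeff a := by
  rw [Polynomial.comp, eval₂_eq_sum_range' C hp, sum_mul, finsetSum_coeff, sum_range]
  simp only [mul_assoc, coeff_C_mul]

theorem natDegree_X_add_C_pow_lt (r : R) {N : ℕ} (i : Fin N) :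
    ((X + C r) ^ (i : ℕ)).natDegree < N :=
  (natDegree_pow_le_of_le i (natDegree_add_C.trans_le natDegree_X_le)).trans_lt (by simp)

theorem taylorMatrix_mul_taylorMatrix (q r : R) (N k : ℕ) :
    taylorMatrix q N N * taylorMatrix r N k = taylorMatrix (q + r) N k := by
  ext i a
  have h := sum_coeff_mul_coeff_pow_mul (natDegree_X_add_C_pow_lt q i) (X + C r) 1 a
  simpa [mul_apply, taylorMatrix_apply, add_comm, add_left_comm] using h

theorem det_taylorMatrix_self (r : R) (N : ℕ) : (taylorMatrix r N N).det = 1 := by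
  rw [det_of_isLowerTriangular]
  · simp [taylorMatrix]
  · intro i a hia
    have hia : (i : ℕ) < a := hia
    simp [taylorMatrix, Nat.choose_eq_zero_of_lt hia]

theorem det_taylorMatrix_submatrix_natAdd (r : R) (m n : ℕ) :
    ((taylorMatrix r (m + n) n).submatrix (Fin.natAdd m) id).det = r ^ (m * n) := by
  -- Row `i` holds coefficients of `(X + C r) ^ i * (X + C r) ^ m`: expand only the first factor.
  let U : Matrix (Fin n) (Fin n) R := of fun j b => (X ^ (j : ℕ) * (X + C r) ^ m).coeff b
  have hLU : (taylorMatrix r (m + n) n).submatrix (Fin.natAdd m) id = taylorMatrix r n n * U := by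
    ext i b
    have h := sum_coeff_mul_coeff_pow_mul (natDegree_X_add_C_pow_lt r i) X ((X + C r) ^ m) b
    simpa [U, mul_apply, taylorMatrix_apply, pow_add, mul_comm] using h.symm
  have hU : U.IsUpperTriangular := by
    intro j b hbj
    have hbj : b < j := hbj
    simp [U, coeff_X_pow_mul', hbj.not_ge]
  rw [hLU, det_mul, det_taylorMatrix_self, one_mul, det_of_isUpperTriangular hU]
  simp [U, coeff_X_pow_mul', coeff_X_add_C_pow, pow_mul]

theorem det_fromCols_taylorMatrix (q r : R) (m n : ℕ) :
    ((fromCols (taylorMatrix q (m + n) m) (taylorMatrix r (m + n) n)).submatrix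
      finSumFinEquiv id).det = (r - q) ^ (m * n) := by
  have htranslate : fromCols (taylorMatrix q (m + n) m) (taylorMatrix r (m + n) n) =
      taylorMatrix q (m + n) (m + n) *
        fromCols (taylorMatrix 0 (m + n) m) (taylorMatrix (r - q) (m + n) n) := by
    rw [mul_fromCols, taylorMatrix_mul_taylorMatrix, taylorMatrix_mul_taylorMatrix, add_zero,
      add_sub_cancel]
  have hblocks : (fromCols (taylorMatrix 0 (m + n) m)
      (taylorMatrix (r - q) (m + n) n)).submatrix finSumFinEquiv id =
      fromBlocks 1 ((taylorMatrix (r - q) (m + n) n).submatrix (Fin.castAdd n) id) 0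
        ((taylorMatrix (r - q) (m + n) n).submatrix (Fin.natAdd m) id) := by
    ext (i | i) (a | a)
    · simp [taylorMatrix_apply, coeff_X_pow, one_apply, Fin.ext_iff, eq_comm]
    · simp
    · have hne : (a : ℕ) ≠ m + i := by lia
      simp [taylorMatrix_apply, coeff_X_pow, hne]
    · simp
  rw [htranslate, ← submatrix_mul_equiv _ _ _ finSumFinEquiv, det_mul, det_submatrix_equiv_self,
    det_taylorMatrix_self, one_mul, hblocks, det_fromBlocks_zero₂₁, det_one, one_mul,
    det_taylorMatrix_submatrix_natAdd]

end TaylorMatrix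

section Vandermonde

variable {R : Type*} [CommRing R]

theorem vand_image_of_strictMono {k : ℕ} {w : Fin k → ℕ} (hw : StrictMono w) :
    vand (univ.image w) = (vandermonde fun i => (w i : ℤ)).det := by
  rw [vand, det_vandermonde, prod_sigma']
  symm
  refine prod_bij (fun p _ => (w p.1, w p.2)) ?_ ?_ ?_ fun _ _ => rfl
  · rintro ⟨i, j⟩ h
    have h : i < j := by simpa using h
    simp [hw.lt_iff_lt, h, hw.injective.eq_iff, h.ne]
  · rintro ⟨i, j⟩ - ⟨i', j'⟩ - h
    simpa [hw.injective.eq_iff] using h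
  · rintro ⟨x, y⟩ h
    simp only [mem_filter, mem_offDiag, mem_image, mem_univ, true_and] at h
    obtain ⟨⟨⟨i, rfl⟩, ⟨j, rfl⟩, -⟩, hij⟩ := h
    exact ⟨⟨i, j⟩, by simpa [hw.lt_iff_lt] using hij, rfl⟩

theorem det_vandermonde_natCast_eq_barnesG_mul {k : ℕ} (v : Fin k → ℕ) :
    (vandermonde fun i => (v i : ℤ)).det =
      barnesG k * (of fun i j : Fin k => ((v i).choose j : ℤ)).det := by
  rw [det_eval_matrixOfPolynomials_eq_det_vandermonde _ (fun j => descPochhammer ℤ j)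
    (fun j => descPochhammer_natDegree ℤ j) (fun j => monic_descPochhammer ℤ j), barnesG,
    prod_range, Nat.cast_prod, ← det_mul_row]
  simp [descPochhammer_eval_eq_descFactorial, Nat.descFactorial_eq_factorial_mul_choose]

theorem pow_mul_det_taylorMatrix_submatrix (q : R) {N k : ℕ} (v : Fin k → Fin N) :
    q ^ (∑ a ∈ range k, a) * ((taylorMatrix q N k).submatrix v id).det =
      q ^ (∑ i, (v i : ℕ)) * (of fun i a : Fin k => ((v i : ℕ).choose a : R)).det := by
  rw [sum_range, ← prod_pow_eq_pow_sum, ← prod_pow_eq_pow_sum, ← det_mul_row, ← det_mul_column]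
  congr 1
  ext i a
  simp only [of_apply, submatrix_apply, id, taylorMatrix]
  rcases le_or_gt (a : ℕ) (v i) with h | h
  · rw [← mul_assoc, pow_mul_pow_sub _ h]
  · simp [Nat.choose_eq_zero_of_lt h]

/-- The embedding `x ↦ x + 1` of `Fin N` into `ℕ`. It labels the rows of a matrix by `1, …, N`, as
`Fin N` itself counts from `0`. -/
def valSucc (N : ℕ) : Fin N ↪ ℕ := Fin.valEmbedding.trans (addRightEmbedding 1)

theorem map_valSucc_univ (N : ℕ) : univ.map (valSucc N) = Icc 1 N := by
  rw [valSucc, ← Finset.map_map, Fin.map_valEmbedding_univ, Nat.Iio_eq_range, range_eq_Ico,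
    map_add_right_Ico]
  rfl

theorem vand_map_valSucc {N k : ℕ} {S : Finset (Fin N)} (hS : #S = k) :
    vand (S.map (valSucc N)) = (vandermonde fun i => ((S.orderEmbOfFin hS i : ℕ) : ℤ)).det := by
  have himage : S.map (valSucc N) = univ.image fun i => (S.orderEmbOfFin hS i + 1 : ℕ) := by
    conv_lhs => rw [← image_orderEmbOfFin_univ S hS, map_eq_image, image_image]
    rfl
  rw [himage, vand_image_of_strictMono fun i j hij => by simpa using hij,
    ← det_vandermonde_add (fun i => ((S.orderEmbOfFin hS i : ℕ) : ℤ)) 1]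
  push_cast
  rfl

theorem barnesG_mul_pow_mul_maximalMinor_taylorMatrix (q : R) {N k : ℕ} {S : Finset (Fin N)}
    (hS : #S = k) :
    barnesG k * q ^ (∑ a ∈ range k, a) * maximalMinor (taylorMatrix q N k) S =
      q ^ (∑ x ∈ S, (x : ℕ)) * vand (S.map (valSucc N)) := by
  have hsum : ∑ i, (S.orderEmbOfFin hS i : ℕ) = ∑ x ∈ S, (x : ℕ) := sum_orderEmbOfFin hS _
  have hcast : (of fun i a : Fin k => ((S.orderEmbOfFin hS i : ℕ).choose a : R)).det =
      (of fun i a : Fin k => ((S.orderEmbOfFin hS i : ℕ).choose a : ℤ)).det := by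
    rw [Int.cast_det]
    congr 1
    ext
    simp
  rw [maximalMinor, dif_pos hS, mul_assoc, pow_mul_det_taylorMatrix_submatrix, hsum, hcast,
    vand_map_valSucc hS, det_vandermonde_natCast_eq_barnesG_mul]
  push_cast
  ring

theorem sum_pow_mul_vand_mul_vand_compl (m n : ℕ) (q : R) :
    ∑ S ∈ powersetCard m (univ : Finset (Fin (m + n))),
      q ^ (∑ x ∈ S, (x : ℕ)) *
        (vand (S.map (valSucc (m + n))) * vand (Sᶜ.map (valSucc (m + n))) : ℤ) =
      barnesG m * barnesG n * (q ^ (∑ i ∈ range m, i) * (1 + q) ^ (m * n)) := by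
  have hterm (S : Finset (Fin (m + n))) (hS : S ∈ powersetCard m univ) :
      q ^ (∑ x ∈ S, (x : ℕ)) *
          (vand (S.map (valSucc (m + n))) * vand (Sᶜ.map (valSucc (m + n))) : ℤ) =
        barnesG m * barnesG n * q ^ (∑ i ∈ range m, i) *
          ((-1) ^ (∑ i ∈ range m, i + ∑ x ∈ S, (x : ℕ)) *
            (maximalMinor (taylorMatrix (-q) (m + n) m) S *
              maximalMinor (taylorMatrix 1 (m + n) n) Sᶜ)) := by
    have hm : #S = m := by simpa using hS
    have hn : #Sᶜ = n := by simp [card_compl, hm]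
    have hX := barnesG_mul_pow_mul_maximalMinor_taylorMatrix (-q) hm
    have hY : barnesG n * maximalMinor (taylorMatrix (1 : R) (m + n) n) Sᶜ =
        vand (Sᶜ.map (valSucc (m + n))) := by
      simpa using barnesG_mul_pow_mul_maximalMinor_taylorMatrix (1 : R) hn
    calc
      _ = (-1) ^ (∑ x ∈ S, (x : ℕ)) *
            ((-q) ^ (∑ x ∈ S, (x : ℕ)) * vand (S.map (valSucc (m + n)))) *
            vand (Sᶜ.map (valSucc (m + n))) := by
        rw [← mul_assoc, ← mul_pow, neg_one_mul, neg_neg, Int.cast_mul, mul_assoc]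
      _ = _ := by
        rw [← hX, ← hY, neg_pow q, pow_add]
        ring
  rw [sum_congr rfl hterm, ← mul_sum, ← det_fromCols_eq_sum_maximalMinor, det_fromCols_taylorMatrix,
    sub_neg_eq_add, mul_assoc]

theorem sum_pow_mul_vand_mul_vand_sdiff (m n : ℕ) (q : R) :
    ∑ X ∈ (Icc 1 (m + n)).powersetCard m,
      q ^ (∑ x ∈ X, x) * (vand X * vand (Icc 1 (m + n) \ X) : ℤ) =
        barnesG m * barnesG n * (q ^ (m * (m + 1) / 2) * (1 + q) ^ (m * n)) := by
  have hcard {S : Finset (Fin (m + n))} (hS : S ∈ powersetCard m univ) : #S = m := by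
    simpa using hS
  have hsum {S : Finset (Fin (m + n))} (hS : S ∈ powersetCard m univ) :
      ∑ x ∈ S.map (valSucc (m + n)), x = m + ∑ x ∈ S, (x : ℕ) := by
    simp [valSucc, sum_add_distrib, hcard hS, add_comm]
  have htriangle : m + ∑ i ∈ range m, i = m * (m + 1) / 2 := by
    rw [add_comm, ← sum_range_succ (fun i => i), sum_range_id, add_tsub_cancel_right, mul_comm]
  rw [← htriangle, pow_add, mul_assoc (q ^ m), mul_left_comm, ← sum_pow_mul_vand_mul_vand_compl,
    mul_sum, ← map_valSucc_univ, powersetCard_map, sum_map]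
  refine sum_congr rfl fun S hS => ?_
  rw [RelEmbedding.coe_toEmbedding, mapEmbedding_apply, hsum hS, ← Finset.map_sdiff,
    ← compl_eq_univ_sdiff, pow_add, mul_assoc]

end Vandermonde

theorem stmt0 (m n : ℕ) (hm : 0 < m) (hn : 0 < n) (t : ℕ)
    (h1 : m * (m + 1) / 2 ≤ t) (h2 : t ≤ m * (m + 1) / 2 + m * n) :
    ∑ X ∈ ((Finset.Icc 1 (m + n)).powersetCard m).filter (fun X => ∑ x ∈ X, x = t),
      vand X * vand (Finset.Icc 1 (m + n) \ X)
    = (barnesG m : ℤ) * (barnesG n : ℤ) * (Nat.choose (m * n) (t - m * (m + 1) / 2) : ℤ) := by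
  have hcoeff := congrArg (coeff · t) (sum_pow_mul_vand_mul_vand_sdiff m n (X : ℤ[X]))
  simp only [finsetSum_coeff, coeff_mul_intCast, coeff_X_pow, ← Nat.cast_mul, coeff_natCast_mul,
    coeff_X_pow_mul', coeff_one_add_X_pow, if_pos h1] at hcoeff
  simpa [sum_filter, eq_comm] using hcoeff
end

section
/- Let m and n be positive integers and let t* be an integer with 0 ≤ t* ≤ mn. Then the number of triples (μ, P, Q), where μ is a Young diagram with exactly t* boxes, P is a semistandard Young tableau of shape μ with entries in {1, 2, ..., m}, and Q is a semistandard Young tableau of the transpose shape μᵀ with entries in {1, 2, ..., n}, equals the binomial coefficient C(mn, t*). -/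
/-!
Both families of tableaux are counted with weights, which gives the Schur functions `s_μ(x)`.
Reading a tableau as a growing chain of diagrams, the branching rule adds one horizontal strip per
variable; for the transposed shape it adds a vertical strip. Adding a horizontal strip of weight `x`
commutes with removing a vertical strip of weight `y` up to the factor `1 + x y`, because in either
order the choices are the subsets of a finite set of rows, and there is exactly one more free row
when the horizontal strip is added first. Commuting all removals past all additions yields the dual
Cauchy identity `∑_μ s_μ(x) s_{μᵀ}(y) = ∏ (1 + xᵢ yⱼ)`, and the theorem compares coefficients of
`q` at `x = (q, …, q)`, `y = (1, …, 1)`. Weights are taken in `ℝ≥0∞`, where all sums over diagrams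
exist and may be interchanged.
-/

namespace DualCauchy

open Finset
open scoped ENNReal

section Sums

theorem tsum_eq_sum_of_bijOn {X Y : Type*} {f : X → ℝ≥0∞} {g : X → Y} {h : Y → ℝ≥0∞}
    {s : Set X} {t : Finset Y} (hg : Set.BijOn g s t) (hs : Function.support f ⊆ s)
    (hfg : ∀ a ∈ s, f a = h (g a)) : ∑' a, f a = ∑ b ∈ t, h b := by
  rw [← tsum_subtype_eq_of_support_subset hs, ← Finset.tsum_subtype' t h,
    ← (Set.BijOn.equiv g hg).tsum_eq]
  exact tsum_congr fun a => hfg a a.2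

theorem sum_Icc_pow_card_sub {ι R : Type*} [DecidableEq ι] [CommSemiring R] {s t : Finset ι}
    (h : s ⊆ t) (q : R) : ∑ u ∈ Icc s t, q ^ (#u - #s) = (1 + q) ^ (#t - #s) := by
  have hdisj : ∀ u ∈ (t \ s).powerset, Disjoint s u := fun u hu =>
    disjoint_sdiff.mono_right (mem_powerset.1 hu)
  rw [Icc_eq_image_powerset h, sum_image, ← card_sdiff_of_subset h, add_comm,
    ← sum_pow_mul_eq_add_pow]
  · refine sum_congr rfl fun u hu => ?_
    rw [card_union_of_disjoint (hdisj u hu), Nat.add_sub_cancel_left, one_pow, mul_one]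
  · intro u hu v hv huv
    rw [← (hdisj u hu).sdiff_eq_right, ← (hdisj v hv).sdiff_eq_right, ← union_sdiff_left,
      ← union_sdiff_left s v]
    exact congrArg (· \ s) huv

open Polynomial in
theorem card_fiber_eq_choose {ι : Type*} (w : ι → ℕ) (N : ℕ)
    (h : ∀ q : ℕ, ∑' a, (q : ℝ≥0∞) ^ w a = (1 + q) ^ N) (t : ℕ) :
    Nat.card {a // w a = t} = N.choose t := by
  have hfin : Finite ι := by
    by_contra! hinf
    have htop := ENNReal.tsum_const_eq_top_of_ne_zero (α := ι) one_ne_zero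
    have hone := h 1
    simp only [Nat.cast_one, one_pow, htop] at hone
    exact ENNReal.pow_ne_top (by norm_num) hone.symm
  have := Fintype.ofFinite ι
  have hpoly : ∑ a, (X : ℤ[X]) ^ w a = (1 + X) ^ N := by
    refine eq_of_infinite_eval_eq _ _ ((Set.infinite_range_of_injective
      (Nat.cast_injective (R := ℤ))).mono ?_)
    rintro _ ⟨q, rfl⟩
    have hq := h q
    rw [tsum_fintype] at hq
    change eval _ _ = eval _ _
    simp only [eval_finsetSum, eval_pow, eval_add, eval_one, eval_X]
    exact_mod_cast hq
  have hcoeff := congrArg (coeff · t) hpoly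
  simp only [finsetSum_coeff, coeff_X_pow, coeff_one_add_X_pow, sum_boole] at hcoeff
  rw [Nat.card_eq_fintype_card, Fintype.card_subtype]
  simpa only [eq_comm, Nat.cast_inj] using hcoeff

end Sums

section Diagrams

theorem rowLen_injective : Function.Injective YoungDiagram.rowLen := by
  intro μ ν h
  ext ⟨i, j⟩
  rw [YoungDiagram.mem_cells, YoungDiagram.mem_cells, YoungDiagram.mem_iff_lt_rowLen,
    YoungDiagram.mem_iff_lt_rowLen, h]

theorem le_iff_rowLen_le {μ ν : YoungDiagram} : μ ≤ ν ↔ ∀ i, μ.rowLen i ≤ ν.rowLen i := by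
  simp only [SetLike.le_def, Prod.forall, YoungDiagram.mem_iff_lt_rowLen, forall_lt_iff_le]

theorem rowLen_pos_iff {μ : YoungDiagram} {i : ℕ} : 0 < μ.rowLen i ↔ i < μ.colLen 0 := by
  rw [← YoungDiagram.mem_iff_lt_rowLen, YoungDiagram.mem_iff_lt_colLen]

theorem exists_rowLen_eq {f : ℕ → ℕ} (hf : Antitone f) {N : ℕ} (hN : f N = 0) :
    ∃ μ : YoungDiagram, μ.rowLen = f := by
  let μ : YoungDiagram :=
    { cells := (range N ×ˢ range (f 0)).filter fun c => c.2 < f c.1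
      isLowerSet := by
        rintro ⟨i, j⟩ ⟨i', j'⟩ ⟨hi, hj⟩ h
        simp only [mem_coe, mem_filter, mem_product, mem_range] at h hi hj ⊢
        have := hf hi
        omega }
  have hmem (i j : ℕ) : (i, j) ∈ μ ↔ j < f i := by
    rw [← YoungDiagram.mem_cells]
    simp only [μ, mem_filter, mem_product, mem_range, and_iff_right_iff_imp]
    refine fun h => ⟨?_, h.trans_le (hf i.zero_le)⟩
    by_contra! hi
    have := hf hi
    omega
  refine ⟨μ, funext fun i => eq_of_forall_lt_iff fun j => ?_⟩
  rw [← YoungDiagram.mem_iff_lt_rowLen, hmem]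

theorem card_transpose (μ : YoungDiagram) : μ.transpose.card = μ.card :=
  card_map _

theorem transpose_bot : (⊥ : YoungDiagram).transpose = ⊥ :=
  YoungDiagram.transposeOrderIso.map_bot

theorem card_eq_card_add_of_rowLen_eq {μ ν : YoungDiagram} {s : Finset ℕ}
    (h : ∀ i, μ.rowLen i = ν.rowLen i + if i ∈ s then 1 else 0) : μ.card = ν.card + #s := by
  have hinj : Function.Injective fun i => (i, ν.rowLen i) := fun i j hij => (Prod.ext_iff.1 hij).1
  have hdisj : Disjoint ν.cells (s.image fun i => (i, ν.rowLen i)) := by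
    simp only [disjoint_right, mem_image, YoungDiagram.mem_cells]
    rintro _ ⟨i, -, rfl⟩
    exact fun hi => (YoungDiagram.mem_iff_lt_rowLen.1 hi).false
  have hcells : μ.cells = ν.cells ∪ s.image fun i => (i, ν.rowLen i) := by
    ext ⟨i, j⟩
    simp only [mem_union, mem_image, YoungDiagram.mem_cells, YoungDiagram.mem_iff_lt_rowLen, h,
      Prod.mk.injEq, existsAndEq, true_and]
    grind
  rw [YoungDiagram.card, hcells, card_union_of_disjoint hdisj, card_image_of_injective s hinj]

end Diagrams

section Strips

/-- The skew shape `μ / ν` is a horizontal strip: `ν` is contained in `μ` and every column contains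
at most one box of `μ` outside `ν`. -/
def IsHorizontalStrip (ν μ : YoungDiagram) : Prop :=
  ν ≤ μ ∧ ∀ ⦃i j⦄, (i + 1, j) ∈ μ → (i, j) ∈ ν

variable {α β μ ν : YoungDiagram}

theorem isHorizontalStrip_iff_rowLen :
    IsHorizontalStrip ν μ ↔ ∀ i, ν.rowLen i ≤ μ.rowLen i ∧ μ.rowLen (i + 1) ≤ ν.rowLen i := by
  simp only [IsHorizontalStrip, le_iff_rowLen_le, YoungDiagram.mem_iff_lt_rowLen, forall_and,
    forall_lt_iff_le]

theorem isHorizontalStrip_transpose_iff_rowLen :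
    IsHorizontalStrip ν.transpose μ.transpose ↔
      ∀ i, ν.rowLen i ≤ μ.rowLen i ∧ μ.rowLen i ≤ ν.rowLen i + 1 := by
  rw [IsHorizontalStrip, YoungDiagram.transpose_le_iff, le_iff_rowLen_le, forall_and]
  simp only [YoungDiagram.mem_transpose, Prod.swap_prod_mk]
  simp only [YoungDiagram.mem_iff_lt_rowLen]
  refine and_congr_right fun _ => ⟨fun h i => ?_, fun h j i hj => by have := h i; omega⟩
  by_contra! hlt
  exact (h hlt).false

/-- The finite set of rows of `μ` that are longer than the prescribed lengths `f`. -/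
def excessRows (f : ℕ → ℕ) (μ : YoungDiagram) : Finset ℕ :=
  (range (μ.colLen 0)).filter fun i => f i < μ.rowLen i

theorem mem_excessRows {f : ℕ → ℕ} {i : ℕ} : i ∈ excessRows f μ ↔ f i < μ.rowLen i := by
  rw [excessRows, mem_filter, mem_range, ← rowLen_pos_iff, and_iff_right_iff_imp]
  exact (Nat.zero_le _).trans_lt

theorem rowLen_eq_add_of_isHorizontalStrip_transpose
    (h : IsHorizontalStrip ν.transpose μ.transpose) (i : ℕ) :
    μ.rowLen i = ν.rowLen i + if i ∈ excessRows ν.rowLen μ then 1 else 0 := by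
  have := isHorizontalStrip_transpose_iff_rowLen.1 h i
  simp only [mem_excessRows]
  split_ifs <;> omega

theorem card_eq_card_add_card_excessRows (h : IsHorizontalStrip ν.transpose μ.transpose) :
    μ.card = ν.card + #(excessRows ν.rowLen μ) :=
  card_eq_card_add_of_rowLen_eq (rowLen_eq_add_of_isHorizontalStrip_transpose h)

end Strips

section Commutation

/-- The one-variable skew Schur function `s_{μ/ν}(x)`: it is `x ^ |μ / ν|` when `μ / ν` is a
horizontal strip and `0` otherwise. -/
noncomputable def stripWeight (x : ℝ≥0∞) (ν μ : YoungDiagram) : ℝ≥0∞ :=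
  open Classical in if IsHorizontalStrip ν μ then x ^ (μ.card - ν.card) else 0

theorem stripWeight_of_isHorizontalStrip {x : ℝ≥0∞} {ν μ : YoungDiagram}
    (h : IsHorizontalStrip ν μ) : stripWeight x ν μ = x ^ (μ.card - ν.card) :=
  if_pos h

theorem stripWeight_of_not_isHorizontalStrip {x : ℝ≥0∞} {ν μ : YoungDiagram}
    (h : ¬IsHorizontalStrip ν μ) : stripWeight x ν μ = 0 :=
  if_neg h

theorem stripWeight_bot_bot (x : ℝ≥0∞) : stripWeight x ⊥ ⊥ = 1 := by
  have h : IsHorizontalStrip ⊥ ⊥ := ⟨le_rfl, fun _ _ h => (YoungDiagram.notMem_bot _ h).elim⟩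
  rw [stripWeight_of_isHorizontalStrip h, Nat.sub_self, pow_zero]

theorem stripWeight_bot_of_ne_bot (x : ℝ≥0∞) {ν : YoungDiagram} (h : ν ≠ ⊥) :
    stripWeight x ν ⊥ = 0 :=
  stripWeight_of_not_isHorizontalStrip fun hν => h (le_bot_iff.1 hν.1)

/-- The pair `(α, β)` can be completed to a square `ν ⊆ α, β ⊆ μ` in which `μ / α` and `β / ν` are
horizontal strips while `μ / β` and `α / ν` are vertical strips, expressed through row lengths. -/
def IsCompletable (α β : YoungDiagram) : Prop :=
  ∀ i, α.rowLen i ≤ β.rowLen i + 1 ∧ β.rowLen (i + 1) ≤ α.rowLen i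

/-- The common upper corners `μ` of the squares through `α` and `β`. -/
def upperCorners (α β : YoungDiagram) : Set YoungDiagram :=
  {μ | IsHorizontalStrip α μ ∧ IsHorizontalStrip β.transpose μ.transpose}

/-- The common lower corners `ν` of the squares through `α` and `β`. -/
def lowerCorners (α β : YoungDiagram) : Set YoungDiagram :=
  {ν | IsHorizontalStrip ν.transpose α.transpose ∧ IsHorizontalStrip ν β}

/-- The rows that a lower corner may shorten in `α`. -/
def removableRows (α β : YoungDiagram) : Finset ℕ :=
  excessRows (fun i => β.rowLen (i + 1)) α

/-- The rows that an upper corner may lengthen in `β`. -/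
def addableRows (α β : YoungDiagram) : Finset ℕ :=
  insert 0 ((removableRows α β).map (addRightEmbedding 1))

variable {α β : YoungDiagram}

theorem mem_upperCorners_iff {μ : YoungDiagram} :
    μ ∈ upperCorners α β ↔ ∀ i, (α.rowLen i ≤ μ.rowLen i ∧ μ.rowLen (i + 1) ≤ α.rowLen i) ∧
      β.rowLen i ≤ μ.rowLen i ∧ μ.rowLen i ≤ β.rowLen i + 1 := by
  rw [forall_and, ← isHorizontalStrip_iff_rowLen, ← isHorizontalStrip_transpose_iff_rowLen]
  rfl

theorem mem_lowerCorners_iff {ν : YoungDiagram} :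
    ν ∈ lowerCorners α β ↔ ∀ i, (ν.rowLen i ≤ α.rowLen i ∧ α.rowLen i ≤ ν.rowLen i + 1) ∧
      ν.rowLen i ≤ β.rowLen i ∧ β.rowLen (i + 1) ≤ ν.rowLen i := by
  rw [forall_and, ← isHorizontalStrip_iff_rowLen, ← isHorizontalStrip_transpose_iff_rowLen]
  rfl

theorem isCompletable_of_mem_upperCorners {μ : YoungDiagram} (h : μ ∈ upperCorners α β) :
    IsCompletable α β := fun i => by
  have h₀ := mem_upperCorners_iff.1 h i
  have h₁ := mem_upperCorners_iff.1 h (i + 1)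
  omega

theorem isCompletable_of_mem_lowerCorners {ν : YoungDiagram} (h : ν ∈ lowerCorners α β) :
    IsCompletable α β := fun i => by
  have := mem_lowerCorners_iff.1 h i
  omega

theorem stripWeight_mul_eq_zero_of_notMem_upperCorners {μ : YoungDiagram}
    (h : μ ∉ upperCorners α β) (x y : ℝ≥0∞) :
    stripWeight x α μ * stripWeight y β.transpose μ.transpose = 0 := by
  rcases not_and_or.1 h with hμ | hμ <;> simp [stripWeight_of_not_isHorizontalStrip hμ]

theorem stripWeight_mul_eq_zero_of_notMem_lowerCorners {ν : YoungDiagram}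
    (h : ν ∉ lowerCorners α β) (x y : ℝ≥0∞) :
    stripWeight y ν.transpose α.transpose * stripWeight x ν β = 0 := by
  rcases not_and_or.1 h with hν | hν <;> simp [stripWeight_of_not_isHorizontalStrip hν]

theorem mem_removableRows {i : ℕ} : i ∈ removableRows α β ↔ β.rowLen (i + 1) < α.rowLen i :=
  mem_excessRows

theorem zero_mem_addableRows : 0 ∈ addableRows α β :=
  mem_insert_self _ _

theorem succ_mem_addableRows {i : ℕ} : i + 1 ∈ addableRows α β ↔ i ∈ removableRows α β := by
  simp [addableRows]

theorem card_addableRows : #(addableRows α β) = #(removableRows α β) + 1 := by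
  rw [addableRows, card_insert_of_notMem (by simp), card_map]

theorem excessRows_subset_removableRows : excessRows β.rowLen α ⊆ removableRows α β := fun i hi =>
  mem_removableRows.2 ((β.rowLen_anti i _ i.le_succ).trans_lt (mem_excessRows.1 hi))

theorem excessRows_subset_addableRows : excessRows β.rowLen α ⊆ addableRows α β
  | 0, _ => zero_mem_addableRows
  | i + 1, hi => succ_mem_addableRows.2 <| mem_removableRows.2 <|
      (mem_excessRows.1 hi).trans_le (α.rowLen_anti i _ i.le_succ)

theorem exists_upperCorner (h : IsCompletable α β) {s : Finset ℕ}
    (hs : s ∈ Icc (excessRows β.rowLen α) (addableRows α β)) :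
    ∃ μ ∈ upperCorners α β, excessRows β.rowLen μ = s := by
  obtain ⟨hforced, hallowed⟩ := mem_Icc.1 hs
  let f (i : ℕ) : ℕ := β.rowLen i + if i ∈ s then 1 else 0
  have hα_le (i : ℕ) : α.rowLen i ≤ f i := by
    have := h i
    have := mt (@hforced i)
    rw [mem_excessRows] at this
    simp only [f]
    split_ifs with hi <;> grind
  have hle_α (i : ℕ) : f (i + 1) ≤ α.rowLen i := by
    have := h i
    have := fun hi => mem_removableRows.1 (succ_mem_addableRows.1 (@hallowed (i + 1) hi))
    simp only [f]
    split_ifs with hi <;> grind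
  have hzero : f (α.colLen 0 + 1) = 0 := by
    have := hle_α (α.colLen 0)
    have := (rowLen_pos_iff (μ := α)).not.2 (lt_irrefl (α.colLen 0))
    omega
  obtain ⟨μ, hμ⟩ := exists_rowLen_eq
    (antitone_nat_of_succ_le fun i => (hle_α i).trans (hα_le i)) hzero
  refine ⟨μ, mem_upperCorners_iff.2 fun i => ?_, ?_⟩
  · rw [hμ]
    refine ⟨⟨hα_le i, hle_α i⟩, ?_⟩
    simp only [f]
    split_ifs <;> omega
  · ext i
    simp only [mem_excessRows, hμ, f]
    split_ifs with hi <;> simp [hi]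

theorem exists_lowerCorner (h : IsCompletable α β) {s : Finset ℕ}
    (hs : s ∈ Icc (excessRows β.rowLen α) (removableRows α β)) :
    ∃ ν ∈ lowerCorners α β, excessRows ν.rowLen α = s := by
  obtain ⟨hforced, hallowed⟩ := mem_Icc.1 hs
  let f (i : ℕ) : ℕ := α.rowLen i - if i ∈ s then 1 else 0
  have hpos {i : ℕ} (hi : i ∈ s) : β.rowLen (i + 1) < α.rowLen i :=
    mem_removableRows.1 (hallowed hi)
  have hle_β (i : ℕ) : f i ≤ β.rowLen i := by
    have := h i
    have := mt (@hforced i)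
    rw [mem_excessRows] at this
    simp only [f]
    split_ifs with hi <;> grind
  have hβ_le (i : ℕ) : β.rowLen (i + 1) ≤ f i := by
    have := h i
    simp only [f]
    split_ifs with hi <;> grind
  have hzero : f (α.colLen 0) = 0 := by
    have := (rowLen_pos_iff (μ := α)).not.2 (lt_irrefl (α.colLen 0))
    simp only [f]
    omega
  obtain ⟨ν, hν⟩ := exists_rowLen_eq
    (antitone_nat_of_succ_le fun i => (hle_β (i + 1)).trans (hβ_le i)) hzero
  refine ⟨ν, mem_lowerCorners_iff.2 fun i => ?_, ?_⟩
  · rw [hν]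
    refine ⟨?_, hle_β i, hβ_le i⟩
    simp only [f]
    split_ifs <;> omega
  · ext i
    simp only [mem_excessRows, hν, f]
    split_ifs with hi
    · have := hpos hi
      simp only [hi, iff_true]
      omega
    · simp [hi]

theorem bijOn_excessRows_upperCorners (h : IsCompletable α β) :
    Set.BijOn (excessRows β.rowLen) (upperCorners α β)
      (Icc (excessRows β.rowLen α) (addableRows α β) : Finset (Finset ℕ)) := by
  refine ⟨fun μ hμ => mem_coe.2 (mem_Icc.2 ⟨fun i hi => ?_, ?_⟩), fun μ hμ μ' hμ' heq => ?_,
    fun s hs => exists_upperCorner h hs⟩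
  · exact mem_excessRows.2 ((mem_excessRows.1 hi).trans_le (mem_upperCorners_iff.1 hμ i).1.1)
  · rintro (_ | i) hi
    · exact zero_mem_addableRows
    · exact succ_mem_addableRows.2 <| mem_removableRows.2 <|
        (mem_excessRows.1 hi).trans_le (mem_upperCorners_iff.1 hμ i).1.2
  · refine rowLen_injective (funext fun i => ?_)
    rw [rowLen_eq_add_of_isHorizontalStrip_transpose hμ.2,
      rowLen_eq_add_of_isHorizontalStrip_transpose hμ'.2, heq]

theorem bijOn_excessRows_lowerCorners (h : IsCompletable α β) :
    Set.BijOn (fun ν => excessRows ν.rowLen α) (lowerCorners α β)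
      (Icc (excessRows β.rowLen α) (removableRows α β) : Finset (Finset ℕ)) := by
  refine ⟨fun ν hν => mem_coe.2 (mem_Icc.2 ⟨fun i hi => ?_, fun i hi => ?_⟩),
    fun ν hν ν' hν' heq => ?_, fun s hs => exists_lowerCorner h hs⟩
  · exact mem_excessRows.2 ((mem_lowerCorners_iff.1 hν i).2.1.trans_lt (mem_excessRows.1 hi))
  · exact mem_removableRows.2 ((mem_lowerCorners_iff.1 hν i).2.2.trans_lt (mem_excessRows.1 hi))
  · refine rowLen_injective (funext fun i => ?_)
    have hi := rowLen_eq_add_of_isHorizontalStrip_transpose hν.1 i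
    have hexcess : excessRows ν.rowLen α = excessRows ν'.rowLen α := heq
    rw [rowLen_eq_add_of_isHorizontalStrip_transpose hν'.1, hexcess] at hi
    exact (Nat.add_right_cancel hi).symm

theorem card_le_card_add_card_excessRows (h : IsCompletable α β) :
    α.card ≤ β.card + #(excessRows β.rowLen α) := by
  obtain ⟨μ, hμ, heq⟩ := exists_upperCorner h
    (mem_Icc.2 ⟨subset_rfl, excessRows_subset_addableRows⟩)
  rw [← heq, ← card_eq_card_add_card_excessRows hμ.2]
  exact card_le_card (YoungDiagram.cells_subset_iff.2 hμ.1.1)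

theorem tsum_upperCorners (h : IsCompletable α β) (x y : ℝ≥0∞) :
    ∑' μ, stripWeight x α μ * stripWeight y β.transpose μ.transpose =
      x ^ (β.card + #(excessRows β.rowLen α) - α.card) * y ^ #(excessRows β.rowLen α) *
        (1 + x * y) ^ (#(addableRows α β) - #(excessRows β.rowLen α)) := by
  have hbij := bijOn_excessRows_upperCorners h
  rw [← sum_Icc_pow_card_sub excessRows_subset_addableRows, mul_sum]
  refine tsum_eq_sum_of_bijOn hbij (fun μ => ?_) fun μ hμ => ?_
  · exact not_imp_comm.1 fun hμ => stripWeight_mul_eq_zero_of_notMem_upperCorners hμ x y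
  · have hforced := card_le_card (mem_Icc.1 (hbij.mapsTo hμ)).1
    have hα := card_le_card_add_card_excessRows h
    have hcard := card_eq_card_add_card_excessRows hμ.2
    rw [stripWeight_of_isHorizontalStrip hμ.1, stripWeight_of_isHorizontalStrip hμ.2,
      card_transpose, card_transpose, mul_pow, mul_mul_mul_comm, ← pow_add, ← pow_add]
    congr 2 <;> omega

theorem tsum_lowerCorners (h : IsCompletable α β) (x y : ℝ≥0∞) :
    ∑' ν, stripWeight y ν.transpose α.transpose * stripWeight x ν β =
      x ^ (β.card + #(excessRows β.rowLen α) - α.card) * y ^ #(excessRows β.rowLen α) *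
        (1 + x * y) ^ (#(removableRows α β) - #(excessRows β.rowLen α)) := by
  have hbij := bijOn_excessRows_lowerCorners h
  rw [← sum_Icc_pow_card_sub excessRows_subset_removableRows, mul_sum]
  refine tsum_eq_sum_of_bijOn hbij (fun ν => ?_) fun ν hν => ?_
  · exact not_imp_comm.1 fun hν => stripWeight_mul_eq_zero_of_notMem_lowerCorners hν x y
  · have hforced := card_le_card (mem_Icc.1 (hbij.mapsTo hν)).1
    have hα := card_le_card_add_card_excessRows h
    have hcard := card_eq_card_add_card_excessRows hν.1
    rw [stripWeight_of_isHorizontalStrip hν.1, stripWeight_of_isHorizontalStrip hν.2,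
      card_transpose, card_transpose, mul_pow, mul_mul_mul_comm, ← pow_add, ← pow_add, mul_comm]
    congr 2 <;> omega

theorem tsum_stripWeight_comm (x y : ℝ≥0∞) (α β : YoungDiagram) :
    ∑' μ, stripWeight x α μ * stripWeight y β.transpose μ.transpose =
      (1 + x * y) * ∑' ν, stripWeight y ν.transpose α.transpose * stripWeight x ν β := by
  by_cases h : IsCompletable α β
  · have hfree : #(addableRows α β) - #(excessRows β.rowLen α) =
        #(removableRows α β) - #(excessRows β.rowLen α) + 1 := by
      rw [card_addableRows, Nat.sub_add_comm (card_le_card excessRows_subset_removableRows)]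
    rw [tsum_upperCorners h, tsum_lowerCorners h, hfree, pow_succ]
    ring
  · have hupper (μ : YoungDiagram) := stripWeight_mul_eq_zero_of_notMem_upperCorners
      (mt (isCompletable_of_mem_upperCorners (μ := μ)) h) x y
    have hlower (ν : YoungDiagram) := stripWeight_mul_eq_zero_of_notMem_lowerCorners
      (mt (isCompletable_of_mem_lowerCorners (ν := ν)) h) x y
    simp only [hupper, hlower, tsum_zero, mul_zero]

end Commutation

section Tableaux

/-- The semistandard tableaux of shape `μ` with entries in `{1, …, m}`. -/
abbrev BoundedTableau (m : ℕ) (μ : YoungDiagram) : Type :=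
  {T : SemistandardYoungTableau μ // ∀ i j, (i, j) ∈ μ → 1 ≤ T i j ∧ T i j ≤ m}

variable {m : ℕ} {μ ν : YoungDiagram}

/-- The subdiagram formed by the boxes of a tableau whose entry is at most `m`. -/
def cellsLE (m : ℕ) (T : SemistandardYoungTableau μ) : YoungDiagram where
  cells := μ.cells.filter fun c => T c.1 c.2 ≤ m
  isLowerSet := by
    rintro ⟨i, j⟩ ⟨i', j'⟩ ⟨hi, hj⟩ h
    simp only [mem_coe, mem_filter, YoungDiagram.mem_cells] at h ⊢
    have hrow : T i j' ≤ T i j := T.row_weak_of_le hj h.1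
    have hcol : T i' j' ≤ T i j' := T.col_weak hi (μ.up_left_mem le_rfl hj h.1)
    exact ⟨μ.up_left_mem hi hj h.1, hcol.trans (hrow.trans h.2)⟩

theorem mem_cellsLE {T : SemistandardYoungTableau μ} {i j : ℕ} :
    (i, j) ∈ cellsLE m T ↔ (i, j) ∈ μ ∧ T i j ≤ m := by
  rw [← YoungDiagram.mem_cells, cellsLE, mem_filter, YoungDiagram.mem_cells]

theorem isHorizontalStrip_cellsLE (T : BoundedTableau (m + 1) μ) :
    IsHorizontalStrip (cellsLE m T.1) μ := by
  refine ⟨fun c hc => (mem_cellsLE.1 hc).1, fun i j h => mem_cellsLE.2 ?_⟩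
  exact ⟨μ.up_left_mem i.le_succ le_rfl h, Nat.le_of_lt_succ <|
    (T.1.col_strict i.lt_succ_self h).trans_le (T.2 _ _ h).2⟩

/-- The restriction of a tableau to a subdiagram of its shape. -/
def restrict (T : SemistandardYoungTableau μ) (h : ν ≤ μ) : SemistandardYoungTableau ν where
  entry i j := if (i, j) ∈ ν then T i j else 0
  row_weak' hj hc := by
    rw [if_pos hc, if_pos (ν.up_left_mem le_rfl hj.le hc)]
    exact T.row_weak hj (h hc)
  col_strict' hi hc := by
    rw [if_pos hc, if_pos (ν.up_left_mem hi.le le_rfl hc)]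
    exact T.col_strict hi (h hc)
  zeros' hc := if_neg hc

theorem restrict_apply {T : SemistandardYoungTableau μ} {h : ν ≤ μ} {i j : ℕ}
    (hc : (i, j) ∈ ν) : restrict T h i j = T i j :=
  if_pos hc

/-- The extension of a tableau with entries at most `m` by the entry `m + 1` in every box of a
horizontal strip. -/
def extend (T : BoundedTableau m ν) (h : IsHorizontalStrip ν μ) : SemistandardYoungTableau μ where
  entry i j := if (i, j) ∈ ν then T.1 i j else if (i, j) ∈ μ then m + 1 else 0
  row_weak' {i j₁ j₂} hj hc := by
    have hμ := μ.up_left_mem le_rfl hj.le hc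
    have hν := ν.up_left_mem (le_refl i) hj.le
    have hT := T.1.row_weak (i := i) hj
    have hm := T.2 i j₁
    grind
  col_strict' {i₁ i₂ j} hi hc := by
    have hν := h.2 (μ.up_left_mem hi le_rfl hc)
    have hT := T.1.col_strict (j := j) hi
    have hm := T.2 i₁ j hν
    grind
  zeros' hc := by rw [if_neg (mt (@h.1 _) hc), if_neg hc]

theorem extend_apply_of_mem {T : BoundedTableau m ν} {h : IsHorizontalStrip ν μ} {i j : ℕ}
    (hc : (i, j) ∈ ν) : extend T h i j = T.1 i j :=
  if_pos hc

theorem extend_apply_of_notMem {T : BoundedTableau m ν} {h : IsHorizontalStrip ν μ} {i j : ℕ}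
    (hμ : (i, j) ∈ μ) (hν : (i, j) ∉ ν) : extend T h i j = m + 1 :=
  (if_neg hν).trans (if_pos hμ)

theorem cellsLE_extend (T : BoundedTableau m ν) (h : IsHorizontalStrip ν μ) :
    cellsLE m (extend T h) = ν := by
  ext ⟨i, j⟩
  rw [YoungDiagram.mem_cells, YoungDiagram.mem_cells, mem_cellsLE]
  by_cases hν : (i, j) ∈ ν
  · simp [hν, h.1 hν, extend_apply_of_mem hν, (T.2 i j hν).2]
  · simp +contextual [hν, extend_apply_of_notMem]

theorem apply_eq_of_notMem_cellsLE (T : BoundedTableau (m + 1) μ) {i j : ℕ} (hμ : (i, j) ∈ μ)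
    (hc : (i, j) ∉ cellsLE m T.1) : T.1 i j = m + 1 :=
  (T.2 i j hμ).2.antisymm <| Nat.lt_of_not_le fun hle => hc (mem_cellsLE.2 ⟨hμ, hle⟩)

/-- Removing the boxes with entry `m + 1` identifies the tableaux with entries at most `m + 1`
whose smaller entries fill `ν` with the tableaux of shape `ν`. -/
def fiberEquiv (h : IsHorizontalStrip ν μ) :
    ((fun T : BoundedTableau (m + 1) μ => cellsLE m T.1) ⁻¹' {ν}) ≃ BoundedTableau m ν where
  toFun T := ⟨restrict T.1.1 h.1, fun i j hc => by
    rw [restrict_apply hc]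
    have hT : cellsLE m T.1.1 = ν := T.2
    exact ⟨(T.1.2 i j (h.1 hc)).1, (mem_cellsLE.1 (hT.symm ▸ hc)).2⟩⟩
  invFun T := ⟨⟨extend T h, fun i j hc => by
    by_cases hν : (i, j) ∈ ν
    · rw [extend_apply_of_mem hν]
      exact (T.2 i j hν).imp_right Nat.le_succ_of_le
    · rw [extend_apply_of_notMem hc hν]
      exact ⟨Nat.succ_pos m, le_rfl⟩⟩, cellsLE_extend T h⟩
  left_inv T := by
    obtain ⟨T, hT⟩ := T
    obtain rfl : cellsLE m T.1 = ν := hT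
    ext i j
    by_cases hν : (i, j) ∈ cellsLE m T.1
    · rw [extend_apply_of_mem hν, restrict_apply hν]
    by_cases hμ : (i, j) ∈ μ
    · rw [extend_apply_of_notMem hμ hν, apply_eq_of_notMem_cellsLE T hμ hν]
    · rw [SemistandardYoungTableau.zeros _ hμ, T.1.zeros hμ]
  right_inv T := by
    ext i j
    by_cases hν : (i, j) ∈ ν
    · rw [restrict_apply hν, extend_apply_of_mem hν]
    · rw [SemistandardYoungTableau.zeros _ hν, T.1.zeros hν]

end Tableaux

section Schur

/-- The monomial of a tableau: the product over its boxes of the variables named by the entries. -/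
noncomputable def tableauWeight {μ : YoungDiagram} (x : ℕ → ℝ≥0∞)
    (T : SemistandardYoungTableau μ) : ℝ≥0∞ :=
  ∏ c ∈ μ.cells, x (T c.1 c.2)

/-- The Schur polynomial `s_μ(x 1, …, x m)`, as a sum over tableaux; the variables are numbered from
`1`, like the entries. -/
noncomputable def schur (m : ℕ) (x : ℕ → ℝ≥0∞) (μ : YoungDiagram) : ℝ≥0∞ :=
  ∑' T : BoundedTableau m μ, tableauWeight x T.1

variable {m n : ℕ} {x y : ℕ → ℝ≥0∞} {μ ν : YoungDiagram}

theorem tableauWeight_const (q : ℝ≥0∞) (T : SemistandardYoungTableau μ) :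
    tableauWeight (fun _ => q) T = q ^ μ.card :=
  prod_const q

theorem tableauWeight_extend (T : BoundedTableau m ν) (h : IsHorizontalStrip ν μ) :
    tableauWeight x (extend T h) = tableauWeight x T.1 * stripWeight (x (m + 1)) ν μ := by
  have hsub : ν.cells ⊆ μ.cells := YoungDiagram.cells_subset_iff.2 h.1
  rw [stripWeight_of_isHorizontalStrip h, tableauWeight, ← prod_sdiff hsub, mul_comm,
    YoungDiagram.card, YoungDiagram.card, ← card_sdiff_of_subset hsub, ← prod_const]
  congr 1
  · exact prod_congr rfl fun c hc => by rw [extend_apply_of_mem hc]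
  · refine prod_congr rfl fun c hc => ?_
    obtain ⟨hμ, hν⟩ := mem_sdiff.1 hc
    rw [extend_apply_of_notMem hμ hν]

theorem schur_succ : schur (m + 1) x μ = ∑' ν, schur m x ν * stripWeight (x (m + 1)) ν μ := by
  rw [schur, ← ENNReal.tsum_fiberwise _ fun T : BoundedTableau (m + 1) μ => cellsLE m T.1]
  refine tsum_congr fun ν => ?_
  by_cases h : IsHorizontalStrip ν μ
  · rw [schur, ← ENNReal.tsum_mul_right, ← (fiberEquiv h).symm.tsum_eq]
    exact tsum_congr fun T => tableauWeight_extend T h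
  · have : IsEmpty ((fun T : BoundedTableau (m + 1) μ => cellsLE m T.1) ⁻¹' {ν}) :=
      ⟨fun T => h (T.2 ▸ isHorizontalStrip_cellsLE T.1)⟩
    rw [tsum_empty, stripWeight_of_not_isHorizontalStrip h, mul_zero]

theorem schur_succ_transpose :
    schur (n + 1) y μ.transpose = ∑' ν : YoungDiagram,
      schur n y ν.transpose * stripWeight (y (n + 1)) ν.transpose μ.transpose := by
  rw [schur_succ, ← YoungDiagram.transposeOrderIso.toEquiv.tsum_eq]
  rfl

theorem schur_bot : schur m x ⊥ = 1 := by
  have hsub : Subsingleton (SemistandardYoungTableau ⊥) := ⟨fun T T' => by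
    ext i j
    rw [T.zeros (YoungDiagram.notMem_bot _), T'.zeros (YoungDiagram.notMem_bot _)]⟩
  let T₀ : BoundedTableau m ⊥ := ⟨SemistandardYoungTableau.highestWeight ⊥,
    fun _ _ h => (YoungDiagram.notMem_bot _ h).elim⟩
  rw [schur, tsum_eq_single T₀ fun T hT => (hT (Subsingleton.elim T T₀)).elim]
  exact prod_empty

theorem schur_zero_of_ne_bot (h : μ ≠ ⊥) : schur 0 x μ = 0 := by
  have : IsEmpty (BoundedTableau 0 μ) := by
    refine ⟨fun T => h (eq_bot_iff.2 fun c hc => ?_)⟩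
    have := T.2 c.1 c.2 hc
    omega
  rw [schur, tsum_empty]

theorem schur_zero_transpose_of_ne_bot (h : μ ≠ ⊥) : schur 0 x μ.transpose = 0 :=
  schur_zero_of_ne_bot fun hμ => h ((map_eq_bot_iff YoungDiagram.transposeOrderIso).1 hμ)

theorem dual_pieri_rule (n : ℕ) (x : ℝ≥0∞) (y : ℕ → ℝ≥0∞) (α : YoungDiagram) :
    ∑' μ, stripWeight x α μ * schur n y μ.transpose =
      (∏ j ∈ Icc 1 n, (1 + x * y j)) * schur n y α.transpose := by
  induction n generalizing α with
  | zero =>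
    rw [Icc_eq_empty (by simp), prod_empty, one_mul, tsum_eq_single ⊥ fun μ hμ => by
      rw [schur_zero_transpose_of_ne_bot hμ, mul_zero]]
    rw [transpose_bot, schur_bot, mul_one]
    rcases eq_or_ne α ⊥ with rfl | hα
    · rw [stripWeight_bot_bot, transpose_bot, schur_bot]
    · rw [stripWeight_bot_of_ne_bot x hα, schur_zero_transpose_of_ne_bot hα]
  | succ n ih =>
    let s (μ : YoungDiagram) := schur n y μ.transpose
    let v (ν μ : YoungDiagram) := stripWeight (y (n + 1)) ν.transpose μ.transpose
    calc
      _ = ∑' μ, ∑' β, stripWeight x α μ * (s β * v β μ) := by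
        simp only [schur_succ_transpose, ENNReal.tsum_mul_left, s, v]
      _ = ∑' β, s β * ∑' μ, stripWeight x α μ * v β μ := by
        rw [ENNReal.tsum_comm]
        simp only [← ENNReal.tsum_mul_left, mul_left_comm]
      _ = ∑' β, s β * ((1 + x * y (n + 1)) * ∑' ν, v ν α * stripWeight x ν β) := by
        simp only [v, tsum_stripWeight_comm]
      _ = (1 + x * y (n + 1)) * ∑' ν, v ν α * ∑' β, stripWeight x ν β * s β := by
        simp only [← ENNReal.tsum_mul_left]
        rw [ENNReal.tsum_comm]
        exact tsum_congr fun ν => tsum_congr fun β => by ring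
      _ = (1 + x * y (n + 1)) * ∑' ν, v ν α * ((∏ j ∈ Icc 1 n, (1 + x * y j)) * s ν) := by
        simp only [s, ih]
      _ = _ := by
        rw [schur_succ_transpose, prod_Icc_succ_top (by simp)]
        simp only [← ENNReal.tsum_mul_left]
        exact tsum_congr fun ν => by ring

theorem dual_cauchy_identity (m n : ℕ) (x y : ℕ → ℝ≥0∞) :
    ∑' μ, schur m x μ * schur n y μ.transpose =
      ∏ i ∈ Icc 1 m, ∏ j ∈ Icc 1 n, (1 + x i * y j) := by
  induction m with
  | zero =>
    rw [Icc_eq_empty (by simp), prod_empty, tsum_eq_single ⊥ fun μ hμ => by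
      rw [schur_zero_of_ne_bot hμ, zero_mul]]
    rw [transpose_bot, schur_bot, schur_bot, mul_one]
  | succ m ih =>
    calc
      _ = ∑' μ, ∑' α, schur m x α * (stripWeight (x (m + 1)) α μ * schur n y μ.transpose) := by
        simp only [schur_succ, ← ENNReal.tsum_mul_right, mul_assoc]
      _ = ∑' α, schur m x α * ∑' μ, stripWeight (x (m + 1)) α μ * schur n y μ.transpose := by
        rw [ENNReal.tsum_comm]
        simp only [ENNReal.tsum_mul_left]
      _ = (∑' α, schur m x α * schur n y α.transpose) *
          ∏ j ∈ Icc 1 n, (1 + x (m + 1) * y j) := by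
        simp only [dual_pieri_rule, ← ENNReal.tsum_mul_right]
        exact tsum_congr fun α => by ring
      _ = _ := by rw [ih, prod_Icc_succ_top (by simp)]

end Schur

section Counting

/-- The pairs `(P, Q)` of tableaux of transposed shapes `μ` and `μᵀ` with entries in `{1, …, m}` and
`{1, …, n}`, over all `μ`. -/
abbrev TransposedPair (m n : ℕ) : Type :=
  Σ μ : YoungDiagram, BoundedTableau m μ × BoundedTableau n μ.transpose

theorem tsum_transposedPair_pow_card (m n : ℕ) (q : ℝ≥0∞) :
    ∑' p : TransposedPair m n, q ^ p.1.card = (1 + q) ^ (m * n) := by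
  calc
    _ = ∑' μ, schur m (fun _ => q) μ * schur n (fun _ => 1) μ.transpose := by
      rw [ENNReal.tsum_sigma']
      refine tsum_congr fun μ => ?_
      rw [ENNReal.tsum_prod', schur, ← ENNReal.tsum_mul_right]
      simp only [schur, tableauWeight_const, one_pow, ← ENNReal.tsum_mul_left, mul_one]
    _ = _ := by
      simp only [dual_cauchy_identity, mul_one, prod_const, Nat.card_Icc,
        Nat.add_sub_cancel, ← pow_mul, mul_comm m n]

/-- Moves the bounds on the entries from the ambient subtype into the tableaux. -/
def transposedPairEquiv (m n t : ℕ) :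
    {p : Σ μ : YoungDiagram, SemistandardYoungTableau μ × SemistandardYoungTableau μ.transpose //
      p.1.card = t ∧
      (∀ i j, (i, j) ∈ p.1 → 1 ≤ p.2.1 i j ∧ p.2.1 i j ≤ m) ∧
      (∀ i j, (i, j) ∈ p.1.transpose → 1 ≤ p.2.2 i j ∧ p.2.2 i j ≤ n)} ≃
    {p : TransposedPair m n // p.1.card = t} where
  toFun p := ⟨⟨p.1.1, ⟨p.1.2.1, p.2.2.1⟩, ⟨p.1.2.2, p.2.2.2⟩⟩, p.2.1⟩
  invFun p := ⟨⟨p.1.1, p.1.2.1.1, p.1.2.2.1⟩, p.2, p.1.2.1.2, p.1.2.2.2⟩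

end Counting

end DualCauchy

theorem stmt8 (m n t' : ℕ) (hm : 0 < m) (hn : 0 < n) (ht : t' ≤ m * n) :
    Nat.card {p : Σ μ : YoungDiagram,
        SemistandardYoungTableau μ × SemistandardYoungTableau μ.transpose //
      p.1.card = t' ∧
      (∀ i j, (i, j) ∈ p.1 → 1 ≤ p.2.1 i j ∧ p.2.1 i j ≤ m) ∧
      (∀ i j, (i, j) ∈ p.1.transpose → 1 ≤ p.2.2 i j ∧ p.2.2 i j ≤ n)}
    = Nat.choose (m * n) t' := by
  rw [Nat.card_congr (DualCauchy.transposedPairEquiv m n t')]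
  exact DualCauchy.card_fiber_eq_choose (fun p : DualCauchy.TransposedPair m n => p.1.card) (m * n)
    (fun q => DualCauchy.tsum_transposedPair_pow_card m n q) t'
end
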